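/- arXiv:2406.12672 — 2 statements merged into one kernel-verified Lean document; each statement's English description precedes it below -/
import Mathlib

section
/- Let H be a real Hilbert space, let λ > 0, and let a ∈ H. Then the unique minimizer over H of y ↦ (1/2)‖a − y‖² + λ‖y‖ is 0 if ‖a‖ ≤ λ, and is (1 − λ/‖a‖)·a if ‖a‖ > λ. -/
theorem prox_norm_aux {H : Type*} [NormedAddCommGroup H] [InnerProductSpace ℝ H]
    (lam : ℝ) (a p : H) (hg : ‖a - p‖ ≤ lam) (hp : inner ℝ (a - p) p = lam * ‖p‖) (y : H) :
    (1/2 : ℝ) * ‖a - p‖^2 + lam * ‖p‖ + (1/2 : ℝ) * ‖y - p‖^2 ≤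
      (1/2 : ℝ) * ‖a - y‖^2 + lam * ‖y‖ := by
  have h1 : a - y = (a - p) - (y - p) := by abel
  have h2 := norm_sub_sq_real (a - p) (y - p)
  rw [← h1, inner_sub_right, hp] at h2
  have h3 := real_inner_le_norm (a - p) y
  have h4 := mul_le_mul_of_nonneg_right hg (norm_nonneg y)
  linarith

/-- Block soft-thresholding: the unique minimizer over a real Hilbert space `H` of
`y ↦ (1/2)‖a − y‖² + λ‖y‖` is `0` when `‖a‖ ≤ λ` and `(1 − λ/‖a‖) • a` when `‖a‖ > λ`. -/
theorem prox_norm_blockSoftThreshold {H : Type*}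
    [NormedAddCommGroup H] [InnerProductSpace ℝ H] [CompleteSpace H]
    (lam : ℝ) (hlam : 0 < lam) (a : H) :
    IsMinOn (fun y : H => (1/2 : ℝ) * ‖a - y‖^2 + lam * ‖y‖) Set.univ
        (if ‖a‖ ≤ lam then (0 : H) else (1 - lam / ‖a‖) • a) ∧
      ∀ q : H, IsMinOn (fun y : H => (1/2 : ℝ) * ‖a - y‖^2 + lam * ‖y‖) Set.univ q →
        q = (if ‖a‖ ≤ lam then (0 : H) else (1 - lam / ‖a‖) • a) := by
  set p : H := if ‖a‖ ≤ lam then (0 : H) else (1 - lam / ‖a‖) • a with hpdef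
  have key : ‖a - p‖ ≤ lam ∧ inner ℝ (a - p) p = lam * ‖p‖ := by
    by_cases h : ‖a‖ ≤ lam
    · rw [if_pos h] at hpdef
      rw [hpdef]
      simpa using h
    · rw [if_neg h] at hpdef
      push Not at h
      have ha : 0 < ‖a‖ := hlam.trans h
      have hc : 0 ≤ 1 - lam / ‖a‖ := by
        rw [sub_nonneg, div_le_one ha]
        exact h.le
      have hs : a - p = (lam / ‖a‖) • a := by
        rw [hpdef, sub_smul, one_smul]
        abel
      rw [hs, hpdef]
      constructor
      · rw [norm_smul, Real.norm_of_nonneg (by positivity)]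
        field_simp
        exact le_refl _
      · rw [norm_smul, Real.norm_of_nonneg hc, real_inner_smul_left, real_inner_smul_right,
          real_inner_self_eq_norm_sq]
        field_simp
  have aux := prox_norm_aux lam a p key.1 key.2
  refine ⟨?_, ?_⟩
  · intro y _
    have := aux y
    have h0 := sq_nonneg ‖y - p‖
    simp only [Set.mem_setOf_eq]
    linarith
  · intro q hq
    have h1 := aux q
    have h2 : (1/2 : ℝ) * ‖a - q‖^2 + lam * ‖q‖ ≤ (1/2 : ℝ) * ‖a - p‖^2 + lam * ‖p‖ :=
      hq (Set.mem_univ p)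
    have h3 : ‖q - p‖ ^ 2 = 0 := le_antisymm (by linarith) (sq_nonneg _)
    exact sub_eq_zero.mp (norm_eq_zero.mp (pow_eq_zero_iff (two_ne_zero) |>.mp h3))
end

section
/- Let m, n ∈ ℕ, let λ > 0, and let A be a real m × n matrix. Equip the space of m × n real matrices with the Frobenius inner product ⟪A,B⟫ = ∑_{i,j} A_{ij} B_{ij}, and define the regularizer R(B) = λ ∑_{i=1}^{m} ‖B_{i,:}‖₂, where ‖B_{i,:}‖₂ = (∑_{j=1}^{n} B_{ij}²)^{1/2} is the Euclidean norm of the i-th row. Then the unique minimizer B* of B ↦ (1/2)‖A − B‖_F² + R(B) is given row-wise by: B*_{i,:} = 0 if ‖A_{i,:}‖₂ ≤ λ, and B*_{i,:} = (1 − λ/‖A_{i,:}‖₂)·A_{i,:} if ‖A_{i,:}‖₂ > λ. -/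
open scoped BigOperators

theorem row_aux {n : ℕ} (lam : ℝ) (a b p : Fin n → ℝ)
    (h1 : Real.sqrt (∑ j, (a j - p j)^2) ≤ lam)
    (h2 : ∑ j, (a j - p j) * p j = lam * Real.sqrt (∑ j, (p j)^2)) :
    (1/2 : ℝ) * (∑ j, (a j - p j)^2) + lam * Real.sqrt (∑ j, (p j)^2)
      + (1/2 : ℝ) * (∑ j, (b j - p j)^2)
      ≤ (1/2 : ℝ) * (∑ j, (a j - b j)^2) + lam * Real.sqrt (∑ j, (b j)^2) := by
  have h3 : ∑ j, (a j - p j) * b j ≤ lam * Real.sqrt (∑ j, (b j)^2) :=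
    (Real.sum_mul_le_sqrt_mul_sqrt _ _ _).trans
      (mul_le_mul_of_nonneg_right h1 (Real.sqrt_nonneg _))
  have h4 : (∑ j, (a j - b j)^2) = (∑ j, (a j - p j)^2) + 2 * (∑ j, (a j - p j) * p j)
      - 2 * (∑ j, (a j - p j) * b j) + ∑ j, (b j - p j)^2 := by
    simp only [Finset.mul_sum, ← Finset.sum_add_distrib, ← Finset.sum_sub_distrib]
    refine Finset.sum_congr rfl fun j _ => ?_
    ring
  linarith

theorem row_soft {n : ℕ} (lam : ℝ) (hlam : 0 < lam) (a b p : Fin n → ℝ)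
    (hp : ∀ j, p j = if Real.sqrt (∑ j', (a j')^2) ≤ lam then (0 : ℝ)
          else (1 - lam / Real.sqrt (∑ j', (a j')^2)) * a j) :
    (1/2 : ℝ) * (∑ j, (a j - p j)^2) + lam * Real.sqrt (∑ j, (p j)^2)
      + (1/2 : ℝ) * (∑ j, (b j - p j)^2)
      ≤ (1/2 : ℝ) * (∑ j, (a j - b j)^2) + lam * Real.sqrt (∑ j, (b j)^2) := by
  by_cases h : Real.sqrt (∑ j', (a j')^2) ≤ lam
  · simp only [h, if_true] at hp
    apply row_aux
    · simpa [hp] using h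
    · simp [hp]
  · simp only [h, if_false] at hp
    push Not at h
    have hS : 0 ≤ ∑ j', (a j')^2 := Finset.sum_nonneg fun _ _ => sq_nonneg _
    have hsq := Real.sq_sqrt hS
    set s := Real.sqrt (∑ j', (a j')^2) with hs
    have hs0 : 0 < s := hlam.trans h
    have hc : 0 ≤ 1 - lam / s := by
      rw [sub_nonneg, div_le_one hs0]; exact h.le
    have e1 : ∑ j, (a j - p j)^2 = lam ^ 2 := by
      have : ∀ j, (a j - p j)^2 = (lam / s)^2 * (a j)^2 := fun j => by rw [hp]; ring
      simp only [this, ← Finset.mul_sum, ← hsq]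
      field_simp
    have e2 : ∑ j, (p j)^2 = ((1 - lam / s) * s)^2 := by
      have : ∀ j, (p j)^2 = (1 - lam / s)^2 * (a j)^2 := fun j => by rw [hp]; ring
      simp only [this, ← Finset.mul_sum, ← hsq]
      ring
    have e3 : ∑ j, (a j - p j) * p j = lam * ((1 - lam / s) * s) := by
      have : ∀ j, (a j - p j) * p j = (lam / s) * (1 - lam / s) * (a j)^2 :=
        fun j => by rw [hp]; ring
      simp only [this, ← Finset.mul_sum, ← hsq]
      field_simp
    apply row_aux
    · rw [e1, Real.sqrt_sq hlam.le]
    · rw [e3, e2, Real.sqrt_sq (mul_nonneg hc hs0.le)]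

/-- Row-wise soft-thresholding: the proximal operator of `λ` times the `ℓ^{1,2}` matrix
norm (sum of Euclidean norms of the rows), with respect to the Frobenius norm, acts on
each row of `A` by block soft-thresholding, and yields the unique minimizer. -/
theorem prox_l12_rowSoftThreshold {m n : ℕ} (lam : ℝ) (hlam : 0 < lam)
    (A : Matrix (Fin m) (Fin n) ℝ) :
    IsMinOn
        (fun B : Matrix (Fin m) (Fin n) ℝ =>
          (1/2 : ℝ) * (∑ i, ∑ j, (A i j - B i j)^2) +
            lam * ∑ i, Real.sqrt (∑ j, (B i j)^2))
        Set.univ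
        (Matrix.of fun i j =>
          if Real.sqrt (∑ j', (A i j')^2) ≤ lam then (0 : ℝ)
          else (1 - lam / Real.sqrt (∑ j', (A i j')^2)) * A i j) ∧
      ∀ B : Matrix (Fin m) (Fin n) ℝ,
        IsMinOn
          (fun B : Matrix (Fin m) (Fin n) ℝ =>
            (1/2 : ℝ) * (∑ i, ∑ j, (A i j - B i j)^2) +
              lam * ∑ i, Real.sqrt (∑ j, (B i j)^2))
          Set.univ B →
        B = (Matrix.of fun i j =>
          if Real.sqrt (∑ j', (A i j')^2) ≤ lam then (0 : ℝ)
          else (1 - lam / Real.sqrt (∑ j', (A i j')^2)) * A i j) := by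
  set P : Matrix (Fin m) (Fin n) ℝ := (Matrix.of fun i j =>
          if Real.sqrt (∑ j', (A i j')^2) ≤ lam then (0 : ℝ)
          else (1 - lam / Real.sqrt (∑ j', (A i j')^2)) * A i j) with hP
  have key : ∀ B : Matrix (Fin m) (Fin n) ℝ,
      (1/2 : ℝ) * (∑ i, ∑ j, (A i j - P i j)^2) + lam * ∑ i, Real.sqrt (∑ j, (P i j)^2)
        + (1/2 : ℝ) * (∑ i, ∑ j, (B i j - P i j)^2)
      ≤ (1/2 : ℝ) * (∑ i, ∑ j, (A i j - B i j)^2)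
        + lam * ∑ i, Real.sqrt (∑ j, (B i j)^2) := by
    intro B
    simp only [Finset.mul_sum (Finset.univ : Finset (Fin m)), ← Finset.sum_add_distrib]
    exact Finset.sum_le_sum fun i _ =>
      row_soft lam hlam (A i) (B i) (P i) fun j => by rw [hP, Matrix.of_apply]
  constructor
  · intro B _
    have h := key B
    have h0 : 0 ≤ ∑ i, ∑ j, (B i j - P i j)^2 :=
      Finset.sum_nonneg fun _ _ => Finset.sum_nonneg fun _ _ => sq_nonneg _
    simp only [Set.mem_setOf_eq]
    linarith
  · intro B hB
    have h := key B
    have h' := hB (Set.mem_univ P)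
    simp only [Set.mem_setOf_eq] at h'
    have h0 : ∑ i, ∑ j, (B i j - P i j)^2 ≤ 0 := by linarith
    ext i j
    have h1 : (B i j - P i j)^2 ≤ ∑ j, (B i j - P i j)^2 :=
      Finset.single_le_sum (f := fun j => (B i j - P i j)^2)
        (fun _ _ => sq_nonneg _) (Finset.mem_univ j)
    have h2 : ∑ j, (B i j - P i j)^2 ≤ ∑ i, ∑ j, (B i j - P i j)^2 :=
      Finset.single_le_sum (f := fun i => ∑ j, (B i j - P i j)^2)
        (fun _ _ => Finset.sum_nonneg fun _ _ => sq_nonneg _) (Finset.mem_univ i)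
    have h3 : (B i j - P i j)^2 = 0 := le_antisymm (by linarith) (sq_nonneg _)
    exact sub_eq_zero.mp (pow_eq_zero_iff two_ne_zero |>.mp h3)
end
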